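/- Let X ⊆ L_{132} with D(X) < D(L_{132}). Then |X| ≤ 22. -/

import Mathlib

open scoped Classical

/-- `L m k l` is the set of vectors in `ℝ^(m+k+l)` with exactly `m` entries `-1`,
`k` entries `0`, and `l` entries `1`. -/
def L (m k l : ℕ) : Set (EuclideanSpace ℝ (Fin (m+k+l))) :=
  {x | (Finset.univ.filter (fun i => x i = (-1:ℝ))).card = m ∧
       (Finset.univ.filter (fun i => x i = (0:ℝ))).card = k ∧
       (Finset.univ.filter (fun i => x i = (1:ℝ))).card = l}

structure Grp where
  w : Bool
  a0 : ℕ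
  a1 : ℕ
  a2 : ℕ
  a3 : ℕ
  b0 : ℕ
  b1 : ℕ
  b2 : ℕ
  b3 : ℕ
  mA : ℕ
  mB : ℕ
  m0 : ℕ
  m1 : ℕ
  m2 : ℕ
  m3 : ℕ

def trip : List (ℕ × ℕ × ℕ) := [(0, 1, 2), (0, 1, 3), (0, 1, 4), (0, 1, 5), (0, 2, 3), (0, 2, 4), (0, 2, 5), (0, 3, 4), (0, 3, 5), (0, 4, 5), (1, 0, 2), (1, 0, 3), (1, 0, 4), (1, 0, 5), (1, 2, 3), (1, 2, 4), (1, 2, 5), (1, 3, 4), (1, 3, 5), (1, 4, 5), (2, 0, 1), (2, 0, 3), (2, 0, 4), (2, 0, 5), (2, 1, 3), (2, 1, 4), (2, 1, 5), (2, 3, 4), (2, 3, 5), (2, 4, 5), (3, 0, 1), (3, 0, 2), (3, 0, 4), (3, 0, 5), (3, 1, 2), (3, 1, 4), (3, 1, 5), (3, 2, 4), (3, 2, 5), (3, 4, 5), (4, 0, 1), (4, 0, 2), (4, 0, 3), (4, 0, 5), (4, 1, 2), (4, 1, 3), (4, 1, 5), (4, 2, 3), (4, 2, 5), (4, 3, 5),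 (5, 0, 1), (5, 0, 2), (5, 0, 3), (5, 0, 4), (5, 1, 2), (5, 1, 3), (5, 1, 4), (5, 2, 3), (5, 2, 4), (5, 3, 4)]

def groups : List Grp := [
  ⟨true, 0, 1, 2, 3, 10, 11, 12, 13, 1152921504606846960, 1152921504606831615, 1152921504606832625, 1152921504606833650, 1152921504606835700, 1152921504606839800⟩,
  ⟨true, 0, 4, 5, 6, 20, 21, 22, 23, 1152921504606846862, 1152921504591118335, 1152921504592166799, 1152921504593215390, 1152921504595312558, 1152921504599506894⟩,
  ⟨true, 10, 14, 15, 16, 20, 24, 25, 26, 1152921504606731263, 1152921504488357887, 1152921504489291775, 1152921504505035775, 1152921504521829375, 1152921504555416575⟩,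
  ⟨true, 1, 4, 7, 8, 30, 31, 32, 33, 1152921504606846573, 1152921488500719615, 1152921489574461039, 1152921490648202877, 1152921492795686637, 1152921497090654061⟩,
  ⟨true, 11, 14, 17, 18, 30, 34, 35, 36, 1152921504606435327, 1152921383274020863, 1152921384347353087, 1152921400453494783, 1152921417633478655, 1152921451993348095⟩,
  ⟨true, 21, 24, 27, 28, 31, 34, 37, 38, 1152921504185319423, 1152921072962633727, 1152921074690686975, 1152921089737752575, 1152921210114277375, 1152921347687448575⟩,
  ⟨true, 2, 5, 7, 9, 40, 41, 42, 43, 1152921504606846299, 1152905011932430335, 1152906111444057439, 1152907210955685243, 1152909409978940891, 1152913808025452379⟩,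
  ⟨true, 12, 15, 17, 19, 40, 44, 45, 46, 1152921504606154751, 1152797259792908287, 1152798359303847935, 1152814851978293247, 1152832444164435967, 1152867628536918015⟩,
  ⟨true, 22, 25, 27, 29, 41, 44, 47, 48, 1152921503898009599, 1152479500932481023, 1152481699251093503, 1152497092443242495, 1152620237846216703, 1152760975737225215⟩,
  ⟨true, 32, 35, 37, 39, 42, 45, 47, 49, 1152920778757373951, 1152178234746470399, 1152181911238475775, 1152212727628824575, 1152318383824306175, 1152741008606232575⟩,
  ⟨false, 3, 6, 8, 9, 50, 51, 52, 53, 1152921504606846135, 1136033006004207615, 1137158905911049407, 1138284805817892087, 1140536605631577527, 1145040205258948279⟩,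
  ⟨false, 13, 16, 18, 19, 50, 54, 55, 56, 1152921504605986815, 1025694815133630463, 1026820715039621119, 1043709213642317823, 1061723612151996415, 1097752409171222527⟩,
  ⟨false, 23, 26, 28, 29, 51, 54, 57, 58, 1152921503726043135, 700309742056112127, 702561540997382143, 718324139751899135, 844424929519599615, 988540117863890943⟩,
  ⟨false, 33, 36, 38, 39, 52, 55, 57, 59, 1152920602663714815, 391813167581233151, 396315873855406079, 427841131376541695, 535927728591863807, 968273567697338367⟩,
  ⟨false, 43, 46, 48, 49, 53, 56, 58, 59, 1151997914839515135, 207165582859042815, 215257988439474175, 278369955873816575, 494753844220133375, 783265695348555775⟩]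

def n5 : List ℕ := [0, 1, 2, 4, 5, 7, 10, 11, 12, 14, 15, 17, 20, 21, 22, 24, 25, 27, 30, 31, 32, 34, 35, 37, 40, 41, 42, 44, 45, 47]

def bit1 (P i : ℕ) : ℕ := Nat.mod (Nat.shiftRight P i) 2

def force {α : Type} (x : ℕ) (f : ℕ → α) : α :=
  Nat.rec (f 0) (fun n _ => f (Nat.succ n)) x

theorem force_eq {α : Type} (x : ℕ) (f : ℕ → α) : force x f = f x := by
  cases x <;> rfl

def mx (a b : ℕ) : ℕ := cond (Nat.ble a b) b a

def bd (a b : ℕ) : ℕ := cond (Nat.beq a 0) b (cond (Nat.beq b 0) a (mx (mx a b) 2))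

def sc (w : Bool) (a b : ℕ) : ℕ :=
  cond (Nat.beq a 0) 0 (cond (Nat.beq b 0) 0 (cond (Nat.beq (Nat.add a b) 2) 0
    (cond w (Nat.add 10 (Nat.add a b)) (Nat.add a b))))

def sum3 (P x y z : ℕ) : ℕ := Nat.add (bit1 P x) (Nat.add (bit1 P y) (bit1 P z))

def scan (P : ℕ) (k : ℕ → ℕ → Grp → Bool) (l : List Grp) : ℕ → ℕ → ℕ → Grp → Bool :=
  List.rec (fun t t5 _ best => k t t5 best)
    (fun g _ ih t t5 bs best =>
      force (sum3 P g.a0 g.a1 g.a2) fun a' =>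
      force (sum3 P g.b0 g.b1 g.b2) fun b' =>
      force (Nat.add a' (bit1 P g.a3)) fun a =>
      force (Nat.add b' (bit1 P g.b3)) fun b =>
      force (Nat.add t (bd a b)) fun tn =>
      force (cond g.w (Nat.add t5 (bd a' b')) t5) fun t5n =>
      force (sc g.w a b) fun s =>
      cond (Nat.ble s bs) (ih tn t5n bs best) (ih tn t5n s g)) l

def opt (P a b : ℕ) (r : Bool) : Bool :=
  cond (Nat.beq (bit1 P a) 0) true (cond (Nat.beq (bit1 P b) 0) true r)

def g0 : Grp := ⟨true, 0, 1, 2, 3, 10, 11, 12, 13, 1152921504606846960, 1152921504606831615, 1152921504606832625, 1152921504606833650, 1152921504606835700, 1152921504606839800⟩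

def body (ih : ℕ → Bool) (P : ℕ) : Bool :=
    scan P (fun t t5 g =>
      cond (Nat.ble t 45) true (cond (Nat.ble t5 23) true
       (cond (ih (Nat.land P g.mA))
        (cond (ih (Nat.land P g.mB))
         (cond (opt P g.a0 g.b0 (ih (Nat.land P g.m0)))
          (cond (opt P g.a1 g.b1 (ih (Nat.land P g.m1)))
           (cond (opt P g.a2 g.b2 (ih (Nat.land P g.m2)))
            (opt P g.a3 g.b3 (ih (Nat.land P g.m3))) false) false) false) false) false)))
      groups 0 0 0 g0

def go (n : ℕ) : ℕ → Bool :=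
  Nat.rec (fun _ => false) (fun _ ih P => force P (body ih)) n

set_option maxRecDepth 100000 in
theorem go_ok : go 16 1152921504606846975 = true := by decide +kernel

theorem bit1_eq (P i : ℕ) : bit1 P i = (P.testBit i).toNat := by
  rw [Nat.testBit_eq_decide_div_mod_eq]
  change (P >>> i) % 2 = _
  rw [Nat.shiftRight_eq_div_pow]
  rcases Nat.mod_two_eq_zero_or_one (P / 2 ^ i) with h | h <;> simp [h]

theorem bit1_land (P m i : ℕ) : bit1 (Nat.land P m) i = bit1 P i * bit1 m i := by
  rw [bit1_eq, bit1_eq, bit1_eq]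
  change (Nat.testBit (P &&& m) i).toNat = _
  rw [Nat.testBit_and]
  cases P.testBit i <;> cases m.testBit i <;> rfl

theorem mx_eq (a b : ℕ) : mx a b = max a b := by
  unfold mx
  cases h : Nat.ble a b
  · have : ¬ a ≤ b := by
      intro h'
      rw [Nat.ble_eq_true_of_le h'] at h
      cases h
    simp; omega
  · have := Nat.le_of_ble_eq_true h
    simp; omega

theorem bd_eq (a b : ℕ) : bd a b = if a = 0 then b else if b = 0 then a else max (max a b) 2 := by
  unfold bd
  rw [mx_eq, mx_eq]
  cases a <;> cases b <;> simp [Nat.beq]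

def Conf (x0 x1 x2 x3 y0 y1 y2 y3 : ℕ) : Prop :=
  (x0 + y1 ≤ 1 ∧ x0 + y2 ≤ 1 ∧ x0 + y3 ≤ 1) ∧ (x1 + y0 ≤ 1 ∧ x1 + y2 ≤ 1 ∧ x1 + y3 ≤ 1) ∧
  (x2 + y0 ≤ 1 ∧ x2 + y1 ≤ 1 ∧ x2 + y3 ≤ 1) ∧ (x3 + y0 ≤ 1 ∧ x3 + y1 ≤ 1 ∧ x3 + y2 ≤ 1)

theorem bd_bound {x0 x1 x2 x3 y0 y1 y2 y3 a b : ℕ} (h : Conf x0 x1 x2 x3 y0 y1 y2 y3)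
    (h0 : x0 ≤ 1) (h1 : x1 ≤ 1) (h2 : x2 ≤ 1) (h3 : x3 ≤ 1)
    (k0 : y0 ≤ 1) (k1 : y1 ≤ 1) (k2 : y2 ≤ 1) (k3 : y3 ≤ 1)
    (ha : x0 + x1 + x2 + x3 ≤ a) (hb : y0 + y1 + y2 + y3 ≤ b) :
    (x0 + x1 + x2 + x3) + (y0 + y1 + y2 + y3) ≤ bd a b := by
  obtain ⟨⟨_, _, _⟩, ⟨_, _, _⟩, ⟨_, _, _⟩, ⟨_, _, _⟩⟩ := h
  have key : x0 + x1 + x2 + x3 = 0 ∨ y0 + y1 + y2 + y3 = 0 ∨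
      (x0 + x1 + x2 + x3 = 1 ∧ y0 + y1 + y2 + y3 = 1) := by
    interval_cases x0 <;> interval_cases x1 <;> interval_cases x2 <;> interval_cases x3 <;> omega
  rw [bd_eq]
  split_ifs
  · omega
  · omega
  · rcases key with h | h | ⟨h, h'⟩
    · rw [h]; have := le_max_right a b; have := le_max_left (max a b) 2; omega
    · rw [h]; have := le_max_left a b; have := le_max_left (max a b) 2; omega
    · rw [h, h']; exact le_max_right _ _

def t1 (P : ℕ) (g : Grp) : ℕ :=
  bd (sum3 P g.a0 g.a1 g.a2 + bit1 P g.a3) (sum3 P g.b0 g.b1 g.b2 + bit1 P g.b3)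

def t2 (P : ℕ) (g : Grp) : ℕ :=
  cond g.w (bd (sum3 P g.a0 g.a1 g.a2) (sum3 P g.b0 g.b1 g.b2)) 0

theorem scan_cons (P : ℕ) (k : ℕ → ℕ → Grp → Bool) (g : Grp) (l : List Grp) (t t5 bs : ℕ) (best : Grp) :
    scan P k (g :: l) t t5 bs best =
      (force (sum3 P g.a0 g.a1 g.a2) fun a' =>
      force (sum3 P g.b0 g.b1 g.b2) fun b' =>
      force (Nat.add a' (bit1 P g.a3)) fun a =>
      force (Nat.add b' (bit1 P g.b3)) fun b =>
      force (Nat.add t (bd a b)) fun tn =>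
      force (cond g.w (Nat.add t5 (bd a' b')) t5) fun t5n =>
      force (sc g.w a b) fun s =>
      cond (Nat.ble s bs) (scan P k l tn t5n bs best) (scan P k l tn t5n s g)) := rfl

theorem scan_spec (P : ℕ) (k : ℕ → ℕ → Grp → Bool) (l : List Grp) : ∀ t t5 bs best,
    ∃ g ∈ best :: l, scan P k l t t5 bs best = k (t + (l.map (t1 P)).sum) (t5 + (l.map (t2 P)).sum) g := by
  induction l with
  | nil => intro t t5 bs best; exact ⟨best, by simp, by simp [scan]⟩
  | cons g l ih =>
    intro t t5 bs best
    have e : scan P k (g :: l) t t5 bs best =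
      cond (Nat.ble (sc g.w (sum3 P g.a0 g.a1 g.a2 + bit1 P g.a3) (sum3 P g.b0 g.b1 g.b2 + bit1 P g.b3)) bs)
        (scan P k l (t + t1 P g) (t5 + t2 P g) bs best)
        (scan P k l (t + t1 P g) (t5 + t2 P g) (sc g.w (sum3 P g.a0 g.a1 g.a2 + bit1 P g.a3) (sum3 P g.b0 g.b1 g.b2 + bit1 P g.b3)) g) := by
      rw [scan_cons]
      simp only [force_eq]
      unfold t2
      cases g.w <;> rfl
    rw [e]
    simp only [List.map_cons, List.sum_cons, ← add_assoc]
    cases Nat.ble (sc g.w (sum3 P g.a0 g.a1 g.a2 + bit1 P g.a3) (sum3 P g.b0 g.b1 g.b2 + bit1 P g.b3)) bs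
    · obtain ⟨g', hg', h⟩ := ih (t + t1 P g) (t5 + t2 P g) (sc g.w (sum3 P g.a0 g.a1 g.a2 + bit1 P g.a3) (sum3 P g.b0 g.b1 g.b2 + bit1 P g.b3)) g
      exact ⟨g', List.mem_cons_of_mem _ hg', h⟩
    · obtain ⟨g', hg', h⟩ := ih (t + t1 P g) (t5 + t2 P g) bs best
      refine ⟨g', ?_, h⟩
      rcases List.mem_cons.1 hg' with h | h <;> simp [h]

/-- the masks of a group delete what they should and nothing else -/
def maskOK (g : Grp) (i : ℕ) : Bool :=
  (bit1 g.mA i == 1 || i == g.a0 || i == g.a1 || i == g.a2 || i == g.a3) &&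
  (bit1 g.mB i == 1 || i == g.b0 || i == g.b1 || i == g.b2 || i == g.b3) &&
  (bit1 g.m0 i == 1 || i == g.a1 || i == g.a2 || i == g.a3 || i == g.b1 || i == g.b2 || i == g.b3) &&
  (bit1 g.m1 i == 1 || i == g.a0 || i == g.a2 || i == g.a3 || i == g.b0 || i == g.b2 || i == g.b3) &&
  (bit1 g.m2 i == 1 || i == g.a0 || i == g.a1 || i == g.a3 || i == g.b0 || i == g.b1 || i == g.b3) &&
  (bit1 g.m3 i == 1 || i == g.a0 || i == g.a1 || i == g.a2 || i == g.b0 || i == g.b1 || i == g.b2)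

theorem masks_ok : (groups.all fun g => (List.range 60).all fun i => maskOK g i) = true := by
  decide +kernel

def idxOK (g : Grp) : Bool := Nat.blt g.a0 60 && Nat.blt g.a1 60 && Nat.blt g.a2 60 && Nat.blt g.a3 60 &&
  Nat.blt g.b0 60 && Nat.blt g.b1 60 && Nat.blt g.b2 60 && Nat.blt g.b3 60

theorem idx_ok : groups.all idxOK = true := by decide +kernel

theorem g0_mem : g0 ∈ groups := by simp [groups, g0]

def GConf (e : ℕ → ℕ) (g : Grp) : Prop :=
  Conf (e g.a0) (e g.a1) (e g.a2) (e g.a3) (e g.b0) (e g.b1) (e g.b2) (e g.b3)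

def s1 (e : ℕ → ℕ) (g : Grp) : ℕ := (e g.a0 + e g.a1 + e g.a2 + e g.a3) + (e g.b0 + e g.b1 + e g.b2 + e g.b3)
def s2 (e : ℕ → ℕ) (g : Grp) : ℕ := cond g.w ((e g.a0 + e g.a1 + e g.a2 + 0) + (e g.b0 + e g.b1 + e g.b2 + 0)) 0

theorem sum_s1 (e : ℕ → ℕ) : (groups.map (s1 e)).sum = 2 * ((List.range 60).map e).sum := by
  simp only [groups, s1, List.map_cons, List.map_nil, List.sum_cons, List.sum_nil,
    show List.range 60 = [0,1,2,3,4,5,6,7,8,9,10,11,12,13,14,15,16,17,18,19,20,21,22,23,24,25,26,27,28,29,30,31,32,33,34,35,36,37,38,39,40,41,42,43,44,45,46,47,48,49,50,51,52,53,54,55,56,57,58,59] from rfl]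
  ring

theorem sum_s2 (e : ℕ → ℕ) : (groups.map (s2 e)).sum = 2 * (n5.map e).sum := by
  simp only [groups, s2, n5, List.map_cons, List.map_nil, List.sum_cons, List.sum_nil, cond]
  ring

theorem go_sound (e : ℕ → ℕ) (h1 : ∀ i, e i ≤ 1) (hc : ∀ g ∈ groups, GConf e g)
    (hs : 23 ≤ ((List.range 60).map e).sum) (hs5 : 12 ≤ (n5.map e).sum) (n : ℕ) :
    ∀ P, (∀ i < 60, e i ≤ bit1 P i) → go n P = true → False := by
  induction n with
  | zero => intro P _ h; cases h
  | succ n ih =>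
    intro P hP h
    have step : go (n+1) P = scan P (fun t t5 g =>
      cond (Nat.ble t 45) true (cond (Nat.ble t5 23) true
       (cond (go n (Nat.land P g.mA))
        (cond (go n (Nat.land P g.mB))
         (cond (opt P g.a0 g.b0 (go n (Nat.land P g.m0)))
          (cond (opt P g.a1 g.b1 (go n (Nat.land P g.m1)))
           (cond (opt P g.a2 g.b2 (go n (Nat.land P g.m2)))
            (opt P g.a3 g.b3 (go n (Nat.land P g.m3))) false) false) false) false) false)))
      groups 0 0 0 g0 := by
      have : go (n+1) P = force P (body (go n)) := rfl
      rw [this, force_eq, body]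
    rw [step] at h
    obtain ⟨g, hg, hk⟩ := scan_spec P (fun t t5 g =>
      cond (Nat.ble t 45) true (cond (Nat.ble t5 23) true
       (cond (go n (Nat.land P g.mA))
        (cond (go n (Nat.land P g.mB))
         (cond (opt P g.a0 g.b0 (go n (Nat.land P g.m0)))
          (cond (opt P g.a1 g.b1 (go n (Nat.land P g.m1)))
           (cond (opt P g.a2 g.b2 (go n (Nat.land P g.m2)))
            (opt P g.a3 g.b3 (go n (Nat.land P g.m3))) false) false) false) false) false)))
      groups 0 0 0 g0
    rw [hk] at h
    have hg : g ∈ groups := by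
      rcases List.mem_cons.1 hg with h | h
      · rw [h]; exact g0_mem
      · exact h
    have idx : ∀ g ∈ groups, g.a0 < 60 ∧ g.a1 < 60 ∧ g.a2 < 60 ∧ g.a3 < 60 ∧
        g.b0 < 60 ∧ g.b1 < 60 ∧ g.b2 < 60 ∧ g.b3 < 60 := by
      intro g hg
      have := List.all_eq_true.1 idx_ok g hg
      simpa [idxOK, Nat.blt_eq, and_assoc] using this
    have e1 : (groups.map (s1 e)).sum ≤ (groups.map (t1 P)).sum := by
      apply List.sum_le_sum
      intro g hg
      obtain ⟨i0, i1, i2, i3, j0, j1, j2, j3⟩ := idx g hg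
      have c := hc g hg
      have := hP _ i0; have := hP _ i1; have := hP _ i2; have := hP _ i3
      have := hP _ j0; have := hP _ j1; have := hP _ j2; have := hP _ j3
      refine bd_bound c (h1 _) (h1 _) (h1 _) (h1 _) (h1 _) (h1 _) (h1 _) (h1 _) ?_ ?_
      · change _ ≤ bit1 P g.a0 + (bit1 P g.a1 + bit1 P g.a2) + bit1 P g.a3
        omega
      · change _ ≤ bit1 P g.b0 + (bit1 P g.b1 + bit1 P g.b2) + bit1 P g.b3
        omega
    have e2 : (groups.map (s2 e)).sum ≤ (groups.map (t2 P)).sum := by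
      apply List.sum_le_sum
      intro g hg
      obtain ⟨i0, i1, i2, i3, j0, j1, j2, j3⟩ := idx g hg
      have c := hc g hg
      unfold s2 t2
      cases g.w
      · exact le_refl _
      have := hP _ i0; have := hP _ i1; have := hP _ i2
      have := hP _ j0; have := hP _ j1; have := hP _ j2
      refine bd_bound ?_ (h1 _) (h1 _) (h1 _) (Nat.zero_le _) (h1 _) (h1 _) (h1 _) (Nat.zero_le _) ?_ ?_
      · unfold GConf Conf at c
        unfold Conf
        have := h1 g.a0; have := h1 g.a1; have := h1 g.a2
        have := h1 g.b0; have := h1 g.b1; have := h1 g.b2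
        omega
      · change _ ≤ bit1 P g.a0 + (bit1 P g.a1 + bit1 P g.a2)
        omega
      · change _ ≤ bit1 P g.b0 + (bit1 P g.b1 + bit1 P g.b2)
        omega
    rw [sum_s1] at e1
    rw [sum_s2] at e2
    have f1 : Nat.ble (0 + (groups.map (t1 P)).sum) 45 = false := by
      rw [Bool.eq_false_iff]; intro h; have := Nat.le_of_ble_eq_true h; omega
    have f2 : Nat.ble (0 + (groups.map (t2 P)).sum) 23 = false := by
      rw [Bool.eq_false_iff]; intro h; have := Nat.le_of_ble_eq_true h; omega
    simp only [f1, f2, Bool.cond_false, Bool.cond_false_right, Bool.and_eq_true] at h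
    obtain ⟨gA, gB, o0, o1, o2, o3⟩ := h
    have hm := fun i (hi : i < 60) => List.all_eq_true.1 (List.all_eq_true.1 masks_ok g hg) i (List.mem_range.2 hi)
    simp only [maskOK, Bool.and_eq_true, Bool.or_eq_true, beq_iff_eq] at hm
    have ext : ∀ m, (∀ i < 60, bit1 m i = 1 ∨ e i = 0) → go n (Nat.land P m) = true → False := by
      intro m hm' hgo
      refine ih _ ?_ hgo
      intro i hi
      rw [bit1_land]
      rcases hm' i hi with h | h
      · rw [h, mul_one]; exact hP i hi
      · rw [h]; exact Nat.zero_le _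
    obtain ⟨i0, i1, i2, i3, j0, j1, j2, j3⟩ := idx g hg
    have c := hc g hg
    unfold GConf Conf at c
    have := h1 g.a0; have := h1 g.a1; have := h1 g.a2; have := h1 g.a3
    have := h1 g.b0; have := h1 g.b1; have := h1 g.b2; have := h1 g.b3
    have opt_spec : ∀ a b r, a < 60 → b < 60 → e a = 1 → e b = 1 → opt P a b r = true → r = true := by
      intro a b r ha hb ea eb ho
      have h2 := hP a ha
      have h3 := hP b hb
      have n2 : Nat.beq (bit1 P a) 0 = false := by
        rw [Bool.eq_false_iff]; intro h; have := Nat.eq_of_beq_eq_true h; omega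
      have n3 : Nat.beq (bit1 P b) 0 = false := by
        rw [Bool.eq_false_iff]; intro h; have := Nat.eq_of_beq_eq_true h; omega
      simpa [opt, n2, n3] using ho
    have cases6 : (e g.a0 = 0 ∧ e g.a1 = 0 ∧ e g.a2 = 0 ∧ e g.a3 = 0) ∨
      (e g.b0 = 0 ∧ e g.b1 = 0 ∧ e g.b2 = 0 ∧ e g.b3 = 0) ∨
      (e g.a0 = 1 ∧ e g.b0 = 1) ∨ (e g.a1 = 1 ∧ e g.b1 = 1) ∨ (e g.a2 = 1 ∧ e g.b2 = 1) ∨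
      (e g.a3 = 1 ∧ e g.b3 = 1) := by omega
    rcases cases6 with z | z | z | z | z | z
    · refine ext _ ?_ gA
      intro i hi
      rcases (hm i hi).1.1.1.1.1 with (((h | h) | h) | h) | h <;> (try subst h) <;> omega
    · refine ext _ ?_ gB
      intro i hi
      rcases (hm i hi).1.1.1.1.2 with (((h | h) | h) | h) | h <;> (try subst h) <;> omega
    · refine ext _ ?_ (opt_spec _ _ _ i0 j0 z.1 z.2 o0)
      intro i hi
      rcases (hm i hi).1.1.1.2 with (((((h | h) | h) | h) | h) | h) | h <;> (try subst h) <;> omega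
    · refine ext _ ?_ (opt_spec _ _ _ i1 j1 z.1 z.2 o1)
      intro i hi
      rcases (hm i hi).1.1.2 with (((((h | h) | h) | h) | h) | h) | h <;> (try subst h) <;> omega
    · refine ext _ ?_ (opt_spec _ _ _ i2 j2 z.1 z.2 o2)
      intro i hi
      rcases (hm i hi).1.2 with (((((h | h) | h) | h) | h) | h) | h <;> (try subst h) <;> omega
    · refine ext _ ?_ (opt_spec _ _ _ i3 j3 z.1 z.2 o3)
      intro i hi
      rcases (hm i hi).2 with (((((h | h) | h) | h) | h) | h) | h <;> (try subst h) <;> omega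

theorem full_ok : ((List.range 60).all fun i => bit1 1152921504606846975 i == 1) = true := by decide +kernel

theorem core (e : ℕ → ℕ) (h1 : ∀ i, e i ≤ 1) (hc : ∀ g ∈ groups, GConf e g)
    (hs : 23 ≤ ((List.range 60).map e).sum) (hs5 : 12 ≤ (n5.map e).sum) : False := by
  refine go_sound e h1 hc hs hs5 16 _ ?_ go_ok
  intro i hi
  have := List.all_eq_true.1 full_ok i (List.mem_range.2 hi)
  rw [beq_iff_eq] at this
  rw [this]; exact h1 i

def vec (i : ℕ) (k : Fin (1+3+2)) : ℤ :=
  cond (Nat.beq k.val (trip.getD i (0, 0, 0)).1) (-1)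
    (cond (Nat.beq k.val (trip.getD i (0, 0, 0)).2.1) 1
      (cond (Nat.beq k.val (trip.getD i (0, 0, 0)).2.2) 1 0))

def ds (i j : ℕ) : ℤ := ∑ k, (vec i k - vec j k) ^ 2

def ok10 (g : Grp) : Bool :=
  (ds g.a0 g.b1 == 10 && ds g.a0 g.b2 == 10 && ds g.a0 g.b3 == 10) &&
  (ds g.a1 g.b0 == 10 && ds g.a1 g.b2 == 10 && ds g.a1 g.b3 == 10) &&
  (ds g.a2 g.b0 == 10 && ds g.a2 g.b1 == 10 && ds g.a2 g.b3 == 10) &&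
  (ds g.a3 g.b0 == 10 && ds g.a3 g.b1 == 10 && ds g.a3 g.b2 == 10)

theorem all10 : groups.all ok10 = true := by decide +kernel

theorem le10 : ((List.range 60).all fun i => (List.range 60).all fun j => decide (ds i j ≤ 10)) = true := by
  decide +kernel

def tgt (a b c k : Fin (1+3+2)) : ℤ :=
  cond (Nat.beq k.val a.val) (-1) (cond (Nat.beq k.val b.val) 1 (cond (Nat.beq k.val c.val) 1 0))

def sw (u k : Fin (1+3+2)) : Fin (1+3+2) :=
  cond (Nat.beq k.val u.val) 5 (cond (Nat.beq k.val 5) u k)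

theorem sw_sw (u k : Fin (1+3+2)) : sw u (sw u k) = k := by revert u k; decide +kernel

theorem sw_self (u : Fin (1+3+2)) : sw u u = 5 := by revert u; decide +kernel

def findOK (u a b c : Fin (1+3+2)) : Bool :=
  (List.range 60).any fun i => (List.finRange 6).all fun k => vec i (sw u k) == tgt a b c k

theorem find_ok : ∀ u a b c : Fin (1+3+2), a = b ∨ a = c ∨ b = c ∨ findOK u a b c = true := by
  decide +kernel

theorem n5_ok : ((List.range 60).all fun i => (vec i 5 != 0) || n5.contains i) = true := by
  decide +kernel

noncomputable def pt (u : Fin (1+3+2)) (i : ℕ) : EuclideanSpace ℝ (Fin (1+3+2)) :=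
  WithLp.toLp 2 fun k => ((vec i (sw u k) : ℤ) : ℝ)

theorem dist_pt (u : Fin (1+3+2)) (i j : ℕ) : dist (pt u i) (pt u j) = √((ds i j : ℤ) : ℝ) := by
  rw [EuclideanSpace.dist_eq]
  congr 1
  have : ds i j = ∑ k, (vec i (sw u k) - vec j (sw u k)) ^ 2 := by
    unfold ds
    exact (Equiv.sum_comp (⟨sw u, sw u, sw_sw u, sw_sw u⟩ : Equiv.Perm (Fin (1+3+2)))
      (fun k => (vec i k - vec j k) ^ 2)).symm
  rw [this]
  push_cast
  refine Finset.sum_congr rfl fun k _ => ?_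
  rw [Real.dist_eq, sq_abs]
  rfl

theorem L_pt (u : Fin (1+3+2)) (x : EuclideanSpace ℝ (Fin (1+3+2))) (hx : x ∈ L 1 3 2) :
    ∃ i < 60, pt u i = x := by
  obtain ⟨h1, h2, h3⟩ := hx
  obtain ⟨a, ha⟩ := Finset.card_eq_one.1 h1
  obtain ⟨b, c, hbc, hb⟩ := Finset.card_eq_two.1 h3
  have xa : ∀ k, x k = -1 ↔ k = a := fun k => by
    have := Finset.ext_iff.1 ha k
    simpa using this
  have xb : ∀ k, x k = 1 ↔ k = b ∨ k = c := fun k => by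
    have := Finset.ext_iff.1 hb k
    simpa using this
  have hab : a ≠ b := by
    intro h
    have p := (xa a).2 rfl
    have q := (xb a).2 (Or.inl h)
    linarith
  have hac : a ≠ c := by
    intro h
    have p := (xa a).2 rfl
    have q := (xb a).2 (Or.inr h)
    linarith
  have hz : Finset.univ.filter (fun i => x i = (0:ℝ)) = ({a, b, c} : Finset (Fin (1+3+2)))ᶜ := by
    apply Finset.eq_of_subset_of_card_le
    · intro k hk
      have hk : x k = 0 := by simpa using hk
      simp only [Finset.mem_compl, Finset.mem_insert, Finset.mem_singleton, not_or]
      refine ⟨fun h => ?_, fun h => ?_, fun h => ?_⟩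
      · have := (xa k).2 h; linarith
      · have := (xb k).2 (Or.inl h); linarith
      · have := (xb k).2 (Or.inr h); linarith
    · rw [h2, Finset.card_compl, Finset.card_eq_three.2 ⟨a, b, c, hab, hac, hbc, rfl⟩]
      simp
  have x0 : ∀ k, k ≠ a → k ≠ b → k ≠ c → x k = 0 := by
    intro k p q r
    have : k ∈ ({a, b, c} : Finset (Fin (1+3+2)))ᶜ := by simp [p, q, r]
    rw [← hz] at this
    simpa using this
  have hf := find_ok u a b c
  simp only [hab, hac, hbc, false_or] at hf
  obtain ⟨i, hi, hk⟩ := List.any_eq_true.1 hf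
  refine ⟨i, List.mem_range.1 hi, ?_⟩
  ext k
  have hk' := List.all_eq_true.1 hk k (List.mem_finRange k)
  rw [beq_iff_eq] at hk'
  change ((vec i (sw u k) : ℤ) : ℝ) = x k
  rw [hk']
  have beq : ∀ p q : Fin (1+3+2), Nat.beq p.val q.val = decide (p = q) := by decide +kernel
  unfold tgt
  rw [beq, beq, beq]
  by_cases p : k = a
  · rw [(xa k).2 p]; simp [p]
  by_cases q : k = b
  · rw [(xb k).2 (Or.inl q)]; subst q; simp [p]
  by_cases r : k = c
  · rw [(xb k).2 (Or.inr r)]; subst r; simp [p]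
  rw [x0 k p q r]; simp [p, q, r]

theorem L_diam : Metric.diam (L 1 3 2) ≤ √10 := by
  apply Metric.diam_le_of_forall_dist_le (Real.sqrt_nonneg _)
  intro x hx y hy
  obtain ⟨i, hi, rfl⟩ := L_pt 5 x hx
  obtain ⟨j, hj, rfl⟩ := L_pt 5 y hy
  rw [dist_pt]
  apply Real.sqrt_le_sqrt
  have := List.all_eq_true.1 (List.all_eq_true.1 le10 i (List.mem_range.2 hi)) j (List.mem_range.2 hj)
  exact_mod_cast of_decide_eq_true this

theorem L_finite : (L 1 3 2).Finite := by
  refine Set.Finite.subset ((Set.finite_lt_nat 60).image (pt 5)) ?_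
  intro x hx
  obtain ⟨i, hi, h⟩ := L_pt 5 x hx
  exact ⟨i, hi, h⟩

theorem card_le_sum (u : Fin (1+3+2)) (F : Finset (EuclideanSpace ℝ (Fin (1+3+2)))) (e : ℕ → ℕ)
    (l : List ℕ) (hl : l.Nodup) (h : ∀ x ∈ F, ∃ i ∈ l, e i = 1 ∧ pt u i = x) : F.card ≤ (l.map e).sum := by
  have h1 : F ⊆ (l.toFinset.filter fun i => e i = 1).image (pt u) := by
    intro x hx
    obtain ⟨i, hi, he, hp⟩ := h x hx
    exact Finset.mem_image.2 ⟨i, by simp [hi, he], hp⟩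
  refine (Finset.card_le_card h1).trans (Finset.card_image_le.trans ?_)
  rw [← List.sum_toFinset e hl, Finset.card_filter]
  apply Finset.sum_le_sum
  intro i _
  split_ifs with h
  · exact h.ge
  · exact Nat.zero_le _

theorem stmt_16 (X : Set (EuclideanSpace ℝ (Fin (1+3+2)))) (hX : X ⊆ L 1 3 2)
    (hD : Metric.diam X < Metric.diam (L 1 3 2)) : X.ncard ≤ 22 := by
  by_contra hcon
  have hfin : X.Finite := L_finite.subset hX
  have hb : Bornology.IsBounded X := hfin.isBounded
  obtain ⟨F, rfl⟩ := hfin.exists_finset_coe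
  rw [Set.ncard_coe_finset] at hcon
  have hdist : ∀ x ∈ F, ∀ y ∈ F, dist x y ≠ √10 := by
    intro x hx y hy h
    have := Metric.dist_le_diam_of_mem hb (Finset.mem_coe.2 hx) (Finset.mem_coe.2 hy)
    have := L_diam
    linarith
  have dc : ∑ u : Fin (1+3+2), (F.filter fun x => x u = 0).card = 3 * F.card := by
    simp only [Finset.card_filter]
    rw [Finset.sum_comm]
    rw [mul_comm, ← smul_eq_mul, ← Finset.sum_const]
    refine Finset.sum_congr rfl fun x hx => ?_
    rw [← Finset.card_filter]
    exact (hX (Finset.mem_coe.2 hx)).2.1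
  have hu : ∃ u : Fin (1+3+2), 12 ≤ (F.filter fun x => x u = 0).card := by
    by_contra hno
    push Not at hno
    have : ∑ u : Fin (1+3+2), (F.filter fun x => x u = 0).card ≤ ∑ u : Fin (1+3+2), 11 :=
      Finset.sum_le_sum fun u _ => Nat.le_of_lt_succ (hno u)
    rw [dc] at this
    simp only [Finset.sum_const, Finset.card_univ, Fintype.card_fin, smul_eq_mul] at this
    omega
  obtain ⟨u, hu⟩ := hu
  let e : ℕ → ℕ := fun i => if pt u i ∈ F then 1 else 0
  have he : ∀ i, pt u i ∈ F → e i = 1 := fun i h => if_pos h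
  have e1 : ∀ i, e i ≤ 1 := fun i => by
    change (if pt u i ∈ F then 1 else 0) ≤ 1
    split_ifs <;> omega
  have hcf : ∀ i j, ds i j = 10 → e i + e j ≤ 1 := by
    intro i j hij
    change (if pt u i ∈ F then 1 else 0) + (if pt u j ∈ F then 1 else 0) ≤ 1
    split_ifs with p q
    · exfalso
      apply hdist _ p _ q
      rw [dist_pt, hij]
      norm_num
    all_goals omega
  refine core e e1 ?_ ?_ ?_
  · intro g hg
    have := List.all_eq_true.1 all10 g hg
    simp only [ok10, Bool.and_eq_true, beq_iff_eq] at this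
    obtain ⟨⟨⟨⟨⟨p1, p2⟩, p3⟩, ⟨⟨q1, q2⟩, q3⟩⟩, ⟨⟨r1, r2⟩, r3⟩⟩, ⟨⟨s1, s2⟩, s3⟩⟩ := this
    exact ⟨⟨hcf _ _ p1, hcf _ _ p2, hcf _ _ p3⟩, ⟨hcf _ _ q1, hcf _ _ q2, hcf _ _ q3⟩,
      ⟨hcf _ _ r1, hcf _ _ r2, hcf _ _ r3⟩, ⟨hcf _ _ s1, hcf _ _ s2, hcf _ _ s3⟩⟩
  · refine le_trans (by omega) (card_le_sum u F e _ List.nodup_range ?_)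
    intro x hx
    obtain ⟨i, hi, rfl⟩ := L_pt u x (hX (Finset.mem_coe.2 hx))
    exact ⟨i, List.mem_range.2 hi, he i hx, rfl⟩
  · refine le_trans hu (card_le_sum u _ e _ (by decide +kernel) ?_)
    intro x hx
    obtain ⟨hx, hx0⟩ := Finset.mem_filter.1 hx
    obtain ⟨i, hi, rfl⟩ := L_pt u x (hX (Finset.mem_coe.2 hx))
    refine ⟨i, ?_, he i hx, rfl⟩
    have h5 : vec i 5 = 0 := by
      have : ((vec i (sw u u) : ℤ) : ℝ) = 0 := hx0
      rw [sw_self] at this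
      exact_mod_cast this
    have := List.all_eq_true.1 n5_ok i (List.mem_range.2 hi)
    simpa [h5] using this
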